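/- Let φ, ψ : [0,1] → ℝ be smooth, let e₁ = (1,0,…,0) ∈ ℝⁿ, let μ > 0, and let g ∈ C₀^∞(ℝⁿ × [0,1]). Then for all sufficiently large R > 0, ∫∫ [ ψ''(t) − (R⁴/(32μ)) (φ''(t))² ] e^{2ψ(t)} e^{2μ|x/R − φ(t)e₁|²} |g|² dx dt ≤ ∫∫ e^{2ψ(t)} e^{2μ|x/R − φ(t)e₁|²} |(i∂ₜ + Δ)g|² dx dt. -/

import Mathlib

open MeasureTheory Metric Set Filter
open scoped ENNReal NNReal Topology

/-- The Laplacian of a complex-valued function on `ℝⁿ`. -/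
noncomputable def lapl {n : ℕ} (f : EuclideanSpace ℝ (Fin n) → ℂ)
    (x : EuclideanSpace ℝ (Fin n)) : ℂ :=
  ∑ i, fderiv ℝ (fun y => fderiv ℝ f y (EuclideanSpace.single i 1)) x (EuclideanSpace.single i 1)

section CarlemanHelpers
open scoped ContDiff

variable {E F : Type*} [NormedAddCommGroup E] [NormedSpace ℝ E]
  [NormedAddCommGroup F] [NormedSpace ℝ F]

/-- directional derivative -/
noncomputable def dd (v : E) (f : E → F) (z : E) : F := fderiv ℝ f z v

@[fun_prop]
lemma dd_smooth {f : E → F} (hf : ContDiff ℝ ∞ f) (v : E) : ContDiff ℝ ∞ (dd v f) := by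
  unfold dd
  exact (hf.fderiv_right (m := ∞) (by simp)).clm_apply contDiff_const

lemma dd_mul {f h : E → ℝ} (hf : ContDiff ℝ ∞ f) (hh : ContDiff ℝ ∞ h) (v z : E) :
    dd v (fun z => f z * h z) z = dd v f z * h z + f z * dd v h z := by
  unfold dd
  rw [fderiv_fun_mul (hf.differentiable (by simp) z) (hh.differentiable (by simp) z)]
  simp
  ring

lemma dd_add {f h : E → F} (hf : ContDiff ℝ ∞ f) (hh : ContDiff ℝ ∞ h) (v z : E) :
    dd v (fun z => f z + h z) z = dd v f z + dd v h z := by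
  unfold dd
  rw [fderiv_fun_add (hf.differentiable (by simp) z) (hh.differentiable (by simp) z)]
  simp

lemma dd_sub {f h : E → F} (hf : ContDiff ℝ ∞ f) (hh : ContDiff ℝ ∞ h) (v z : E) :
    dd v (fun z => f z - h z) z = dd v f z - dd v h z := by
  unfold dd
  rw [fderiv_fun_sub (hf.differentiable (by simp) z) (hh.differentiable (by simp) z)]
  simp

lemma dd_const (c : F) (v z : E) : dd v (fun _ => c) z = 0 := by
  simp [dd]

lemma dd_comm {f : E → F} (hf : ContDiff ℝ ∞ f) (v w z : E) :
    dd v (dd w f) z = dd w (dd v f) z := by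
  have h1 : DifferentiableAt ℝ (fderiv ℝ f) z :=
    (hf.fderiv_right (m := ∞) (by simp)).differentiable (by simp) z
  have key : ∀ a b : E, dd a (dd b f) z = fderiv ℝ (fderiv ℝ f) z a b := by
    intro a b
    change fderiv ℝ (fun z => fderiv ℝ f z b) z a = _
    rw [fderiv_clm_apply h1 (differentiableAt_const b)]
    simp
  rw [key, key]
  exact (hf.contDiffAt.isSymmSndFDerivAt (by
    rw [minSmoothness_of_isRCLikeNormedField]; exact WithTop.coe_le_coe.2 le_top)).eq v w

lemma dd_zero_off {f : E → F} {K : Set E} (hK : IsClosed K) (h : ∀ z, z ∉ K → f z = 0) (v : E) :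
    ∀ z, z ∉ K → dd v f z = 0 := by
  intro z hz
  have : f =ᶠ[𝓝 z] fun _ => 0 := by
    filter_upwards [hK.isOpen_compl.mem_nhds hz] with y hy using h y hy
  simp [dd, this.fderiv_eq]

variable [MeasurableSpace E] [BorelSpace E] [FiniteDimensional ℝ E]

/-- integrable with vanishing integral -/
def ZeroInt {E : Type*} [MeasurableSpace E] (ν : Measure E) (T : E → ℝ) : Prop := Integrable T ν ∧ ∫ z, T z ∂ν = 0

lemma ZeroInt.add {E : Type*} [MeasurableSpace E] {ν : Measure E} {S T : E → ℝ} (hS : ZeroInt ν S) (hT : ZeroInt ν T) :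
    ZeroInt ν (fun z => S z + T z) :=
  ⟨hS.1.add hT.1, by rw [integral_add hS.1 hT.1, hS.2, hT.2, add_zero]⟩

lemma ZeroInt.cmul {E : Type*} [MeasurableSpace E] {ν : Measure E} {T : E → ℝ} (c : ℝ) (hT : ZeroInt ν T) :
    ZeroInt ν (fun z => c * T z) :=
  ⟨hT.1.const_mul c, by rw [integral_const_mul, hT.2, mul_zero]⟩

lemma ZeroInt.sum {E : Type*} [MeasurableSpace E] {ν : Measure E} {ι : Type*} [Fintype ι] {T : ι → E → ℝ}
    (hT : ∀ i, ZeroInt ν (T i)) : ZeroInt ν (fun z => ∑ i, T i z) :=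
  ⟨integrable_finsetSum _ fun i _ => (hT i).1, by
    rw [integral_finsetSum _ fun i _ => (hT i).1]; simp [(hT _).2]⟩

lemma zeroInt_dd {ν : Measure E} [ν.IsAddHaarMeasure] {K : Set E} (hK : IsCompact K)
    {f : E → ℝ} (hf : ContDiff ℝ ∞ f) (h : ∀ z, z ∉ K → f z = 0) (v : E) :
    ZeroInt ν (dd v f) := by
  have h1 : Integrable (dd v f) ν :=
    (dd_smooth hf v).continuous.integrable_of_hasCompactSupport
      (HasCompactSupport.intro hK (dd_zero_off hK.isClosed h v))
  have h2 : Integrable f ν :=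
    hf.continuous.integrable_of_hasCompactSupport (HasCompactSupport.intro hK h)
  refine ⟨h1, ?_⟩
  have := integral_mul_fderiv_eq_neg_fderiv_mul_of_integrable (μ := ν) (f := fun _ : E => (1:ℝ))
    (g := f) (v := v) (by simp) (by simp only [one_mul]; exact h1) (by simpa using h2)
    (fun x _ => by fun_prop) (fun x _ => hf.differentiable (by simp) x)
  simpa [dd] using this

end CarlemanHelpers

/-- The pure algebra behind the Carleman commutator identity, at a point. -/
lemma carleman_algebra {ι : Type*} [Fintype ι] [DecidableEq ι] (o : ι)
    (a c q qt p1 u w ut wt : ℝ) (uj wj ujj wjj ujt wjt y : ι → ℝ) :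
    2 * ((-wt + (∑ j, ujj j) + a ^ 2 * (∑ k, y k ^ 2) * u) *
          (q * w - (∑ j, 2 * a * y j * uj j) - (∑ _j : ι, c) * u) +
        (ut + (∑ j, wjj j) + a ^ 2 * (∑ k, y k ^ 2) * w) *
          (-q * u - (∑ j, 2 * a * y j * wj j) - (∑ _j : ι, c) * w)) =
      (-(qt * (u * u + w * w) + q * (2 * u * ut + 2 * w * wt))
      + ∑ j, (-(2 * c * (ut * w - wt * u)
            + 2 * a * y j * (ujt j * w + ut * wj j - wjt j * u - wt * uj j))
          + (-(2 * a * p1) * (if j = o then 1 else 0) * (uj j * w - wj j * u)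
            + 2 * a * y j * (ujt j * w + uj j * wt - wjt j * u - wj j * ut)))
      + ∑ j, 2 * (-(a * p1) * (if j = o then 1 else 0) * (uj j * w - wj j * u)
            + q * (ujj j * w - wjj j * u))
      + ∑ j, ∑ k, (-2 * (2 * c * (if j = k then 1 else 0) * (uj j * uj k + wj j * wj k)
              + 2 * a * y k * (ujj j * uj k + wjj j * wj k) )
            + (2 * c * (uj j ^ 2 + wj j ^ 2)))
      + ∑ j, -(∑ _k : ι, 2 * c) * (ujj j * u + wjj j * w + uj j ^ 2 + wj j ^ 2)
      + ∑ j, -(a ^ 2 * (2 * y j) * 2 * c * y j * (u ^ 2 + w ^ 2)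
            + a ^ 2 * (∑ k, y k ^ 2) * (2 * c * (u ^ 2 + w ^ 2)
              + 2 * a * y j * (2 * u * uj j + 2 * w * wj j))))
      + (qt * (u ^ 2 + w ^ 2) + 4 * c * (∑ j, (uj j ^ 2 + wj j ^ 2))
        + 4 * a ^ 2 * c * (∑ k, y k ^ 2) * (u ^ 2 + w ^ 2)
        + 4 * a * p1 * (uj o * w - wj o * u)) := by
  have e1 : ∀ f : ι → ℝ, ∑ j, (if j = o then 1 else 0) * f j = f o := by
    intro f; simp
  have e2 : ∀ (j : ι) (f : ι → ℝ), ∑ k, (if j = k then 1 else 0) * f k = f j := by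
    intro j f; simp
  have m1 : ∀ κ : ℝ, ∑ _j : ι, κ = κ * ∑ _j : ι, (1:ℝ) := by
    intro κ; rw [Finset.mul_sum]; simp
  have hP : ∑ j, 2 * a * y j * uj j = 2 * a * ∑ j, y j * uj j := by
    rw [Finset.mul_sum]; exact Finset.sum_congr rfl fun j _ => by ring
  have hQ : ∑ j, 2 * a * y j * wj j = 2 * a * ∑ j, y j * wj j := by
    rw [Finset.mul_sum]; exact Finset.sum_congr rfl fun j _ => by ring
  have s2 : ∑ j, (-(2 * c * (ut * w - wt * u)
            + 2 * a * y j * (ujt j * w + ut * wj j - wjt j * u - wt * uj j))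
          + (-(2 * a * p1) * (if j = o then 1 else 0) * (uj j * w - wj j * u)
            + 2 * a * y j * (ujt j * w + uj j * wt - wjt j * u - wj j * ut)))
      = -(2 * c * (ut * w - wt * u)) * (∑ _j : ι, (1:ℝ))
        + -(4 * a * ut) * (∑ j, y j * wj j) + 4 * a * wt * (∑ j, y j * uj j)
        + -(2 * a * p1) * (uj o * w - wj o * u) := by
    rw [← e1 fun j => uj j * w - wj j * u]
    simp only [Finset.mul_sum, ← Finset.sum_add_distrib]
    exact Finset.sum_congr rfl fun j _ => by ring
  have s3 : ∑ j, 2 * (-(a * p1) * (if j = o then 1 else 0) * (uj j * w - wj j * u)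
            + q * (ujj j * w - wjj j * u))
      = -(2 * a * p1) * (uj o * w - wj o * u) + 2 * q * w * (∑ j, ujj j)
        + -(2 * q * u) * (∑ j, wjj j) := by
    rw [← e1 fun j => uj j * w - wj j * u]
    simp only [Finset.mul_sum, ← Finset.sum_add_distrib]
    exact Finset.sum_congr rfl fun j _ => by ring
  have s4 : ∑ j, ∑ k, (-2 * (2 * c * (if j = k then 1 else 0) * (uj j * uj k + wj j * wj k)
              + 2 * a * y k * (ujj j * uj k + wjj j * wj k) )
            + (2 * c * (uj j ^ 2 + wj j ^ 2)))
      = -(4 * c) * (∑ j, (uj j ^ 2 + wj j ^ 2))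
        + -(4 * a) * (∑ j, y j * uj j) * (∑ j, ujj j)
        + -(4 * a) * (∑ j, y j * wj j) * (∑ j, wjj j)
        + 2 * c * (∑ _j : ι, (1:ℝ)) * (∑ j, (uj j ^ 2 + wj j ^ 2)) := by
    have : ∀ j, ∑ k, (-2 * (2 * c * (if j = k then 1 else 0) * (uj j * uj k + wj j * wj k)
              + 2 * a * y k * (ujj j * uj k + wjj j * wj k) )
            + (2 * c * (uj j ^ 2 + wj j ^ 2)))
        = -(4 * c) * (uj j * uj j + wj j * wj j) + -(4 * a) * ujj j * (∑ k, y k * uj k)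
          + -(4 * a) * wjj j * (∑ k, y k * wj k)
          + 2 * c * (uj j ^ 2 + wj j ^ 2) * (∑ _j : ι, (1:ℝ)) := by
      intro j
      rw [← e2 j fun k => uj j * uj k + wj j * wj k]
      simp only [Finset.mul_sum, ← Finset.sum_add_distrib]
      exact Finset.sum_congr rfl fun k _ => by ring
    rw [Finset.sum_congr rfl fun j _ => this j]
    generalize (∑ k, y k * uj k) = P
    generalize (∑ k, y k * wj k) = Q
    generalize (∑ _j : ι, (1:ℝ)) = N
    simp only [Finset.mul_sum, ← Finset.sum_add_distrib]
    exact Finset.sum_congr rfl fun k _ => by ring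
  have s5 : ∑ j, -(∑ _k : ι, 2 * c) * (ujj j * u + wjj j * w + uj j ^ 2 + wj j ^ 2)
      = -(2 * c * ∑ _j : ι, (1:ℝ)) * u * (∑ j, ujj j)
        + -(2 * c * ∑ _j : ι, (1:ℝ)) * w * (∑ j, wjj j)
        + -(2 * c * ∑ _j : ι, (1:ℝ)) * (∑ j, (uj j ^ 2 + wj j ^ 2)) := by
    rw [m1 (2 * c)]
    generalize (∑ _j : ι, (1:ℝ)) = N
    simp only [Finset.mul_sum, ← Finset.sum_add_distrib]
    exact Finset.sum_congr rfl fun k _ => by ring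
  have s6 : ∑ j, -(a ^ 2 * (2 * y j) * 2 * c * y j * (u ^ 2 + w ^ 2)
            + a ^ 2 * (∑ k, y k ^ 2) * (2 * c * (u ^ 2 + w ^ 2)
              + 2 * a * y j * (2 * u * uj j + 2 * w * wj j)))
      = -(4 * a ^ 2 * c * (u ^ 2 + w ^ 2)) * (∑ k, y k ^ 2)
        + -(a ^ 2 * (∑ k, y k ^ 2) * (2 * c * (u ^ 2 + w ^ 2))) * (∑ _j : ι, (1:ℝ))
        + -(4 * a ^ 3 * (∑ k, y k ^ 2) * u) * (∑ j, y j * uj j)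
        + -(4 * a ^ 3 * (∑ k, y k ^ 2) * w) * (∑ j, y j * wj j) := by
    generalize hY : (∑ k, y k ^ 2) = Y
    nth_rewrite 2 [← hY]
    simp only [Finset.mul_sum, ← Finset.sum_add_distrib]
    exact Finset.sum_congr rfl fun k _ => by ring
  rw [s2, s3, s4, s5, s6, hP, hQ, m1 c]
  ring

section CarlemanCore
open scoped ContDiff

lemma dd_sum {E ι : Type*} [NormedAddCommGroup E] [NormedSpace ℝ E] [Fintype ι] {f : ι → E → ℝ}
    (hf : ∀ i, ContDiff ℝ ∞ (f i)) (v z : E) :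
    dd v (fun z => ∑ i, f i z) z = ∑ i, dd v (f i) z := by
  unfold dd
  rw [fderiv_fun_sum fun i _ => (hf i).differentiable (by simp) z]
  simp

lemma carleman_core {E ι : Type*} [NormedAddCommGroup E] [NormedSpace ℝ E]
    [MeasurableSpace E] [BorelSpace E] [FiniteDimensional ℝ E] [Fintype ι] [DecidableEq ι]
    (ν : Measure E) [ν.IsAddHaarMeasure] {K : Set E} (hK : IsCompact K)
    (o : ι) (e : ι → E) (τ : E) (a c r : ℝ) (hac : a * r = c)
    (u w q p1 : E → ℝ) (y : ι → E → ℝ)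
    (hu : ContDiff ℝ ∞ u) (hw : ContDiff ℝ ∞ w) (hq : ContDiff ℝ ∞ q)
    (hy : ∀ j, ContDiff ℝ ∞ (y j))
    (hu0 : ∀ z, z ∉ K → u z = 0) (hw0 : ∀ z, z ∉ K → w z = 0)
    (hye : ∀ j k z, dd (e j) (y k) z = r * (if j = k then 1 else 0))
    (hyt : ∀ j z, dd τ (y j) z = -p1 z * (if j = o then 1 else 0))
    (hqe : ∀ j z, dd (e j) q z = -(a * p1 z) * (if j = o then 1 else 0)) :
    ∃ T : E → ℝ, ZeroInt ν T ∧ ∀ z,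
      2 * ((-dd τ w z + (∑ j, dd (e j) (dd (e j) u) z) + a ^ 2 * (∑ k, y k z ^ 2) * u z) *
          (q z * w z - (∑ j, 2 * a * y j z * dd (e j) u z) - (∑ _j : ι, c) * u z) +
        (dd τ u z + (∑ j, dd (e j) (dd (e j) w) z) + a ^ 2 * (∑ k, y k z ^ 2) * w z) *
          (-q z * u z - (∑ j, 2 * a * y j z * dd (e j) w z) - (∑ _j : ι, c) * w z)) =
      T z + (dd τ q z * (u z ^ 2 + w z ^ 2)
        + 4 * c * (∑ j, (dd (e j) u z ^ 2 + dd (e j) w z ^ 2))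
        + 4 * a ^ 2 * c * (∑ k, y k z ^ 2) * (u z ^ 2 + w z ^ 2)
        + 4 * a * p1 z * (dd (e o) u z * w z - dd (e o) w z * u z)) := by
  have hdu := fun v => dd_zero_off hK.isClosed hu0 v
  have hdw := fun v => dd_zero_off hK.isClosed hw0 v
  have hV : ContDiff ℝ ∞ (fun z => ∑ k, y k z * y k z) :=
    ContDiff.sum fun k _ => (hy k).mul (hy k)
  have hVe : ∀ j z, dd (e j) (fun z => ∑ k, y k z * y k z) z = 2 * r * y j z := by
    intro j z
    rw [dd_sum fun k => (hy k).mul (hy k)]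
    have : ∀ k, dd (e j) (fun z => y k z * y k z) z
        = (if j = k then 1 else 0) * (2 * r * y k z) := by
      intro k
      rw [dd_mul (hy k) (hy k), hye]
      ring
    rw [Finset.sum_congr rfl fun k _ => this k]
    simp
  let F1 : E → ℝ := fun z => q z * (u z * u z + w z * w z)
  let F2 : ι → E → ℝ := fun j z => (2 * a * y j z) * (dd τ u z * w z - dd τ w z * u z)
  let F2' : ι → E → ℝ := fun j z => (2 * a * y j z) * (dd (e j) u z * w z - dd (e j) w z * u z)
  let F3 : ι → E → ℝ := fun j z => q z * (dd (e j) u z * w z - dd (e j) w z * u z)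
  let F4 : ι → ι → E → ℝ := fun j k z =>
    (2 * a * y k z) * (dd (e j) u z * dd (e k) u z + dd (e j) w z * dd (e k) w z)
  let F4' : ι → ι → E → ℝ := fun j k z =>
    (2 * a * y k z) * (dd (e j) u z * dd (e j) u z + dd (e j) w z * dd (e j) w z)
  let F5 : ι → E → ℝ := fun j z => dd (e j) u z * u z + dd (e j) w z * w z
  let F6 : ι → E → ℝ := fun j z =>
    (a ^ 2 * ∑ k, y k z * y k z) * ((2 * a * y j z) * (u z * u z + w z * w z))
  have z1 : ZeroInt ν (dd τ F1) := zeroInt_dd hK (by fun_prop)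
    (fun z hz => by simp [F1, hu0 z hz, hw0 z hz]) _
  have z2 : ∀ j, ZeroInt ν (dd (e j) (F2 j)) := fun j => zeroInt_dd hK (by fun_prop)
    (fun z hz => by simp [F2, hu0 z hz, hw0 z hz]) _
  have z2' : ∀ j, ZeroInt ν (dd τ (F2' j)) := fun j => zeroInt_dd hK (by fun_prop)
    (fun z hz => by simp [F2', hu0 z hz, hw0 z hz]) _
  have z3 : ∀ j, ZeroInt ν (dd (e j) (F3 j)) := fun j => zeroInt_dd hK (by fun_prop)
    (fun z hz => by simp [F3, hu0 z hz, hw0 z hz]) _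
  have z4 : ∀ j k, ZeroInt ν (dd (e j) (F4 j k)) := fun j k => zeroInt_dd hK (by fun_prop)
    (fun z hz => by simp [F4, hdu _ z hz, hdw _ z hz]) _
  have z4' : ∀ j k, ZeroInt ν (dd (e k) (F4' j k)) := fun j k => zeroInt_dd hK (by fun_prop)
    (fun z hz => by simp [F4', hdu _ z hz, hdw _ z hz]) _
  have z5 : ∀ j, ZeroInt ν (dd (e j) (F5 j)) := fun j => zeroInt_dd hK (by fun_prop)
    (fun z hz => by simp [F5, hu0 z hz, hw0 z hz]) _
  have z6 : ∀ j, ZeroInt ν (dd (e j) (F6 j)) := fun j => zeroInt_dd hK (by fun_prop)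
    (fun z hz => by simp [F6, hu0 z hz, hw0 z hz]) _
  refine ⟨_, (((((z1.cmul (-1)).add (ZeroInt.sum fun j => ((z2 j).cmul (-1)).add (z2' j))).add
    (ZeroInt.sum fun j => (z3 j).cmul 2)).add
    (ZeroInt.sum fun j => ZeroInt.sum fun k => ((z4 j k).cmul (-2)).add (z4' j k))).add
    (ZeroInt.sum fun j => (z5 j).cmul (-(∑ _k : ι, 2 * c)))).add
    (ZeroInt.sum fun j => (z6 j).cmul (-1)), ?_⟩
  intro z
  rw [carleman_algebra o a c (q z) (dd τ q z) (p1 z) (u z) (w z) (dd τ u z) (dd τ w z)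
    (fun j => dd (e j) u z) (fun j => dd (e j) w z) (fun j => dd (e j) (dd (e j) u) z)
    (fun j => dd (e j) (dd (e j) w) z) (fun j => dd (e j) (dd τ u) z)
    (fun j => dd (e j) (dd τ w) z) (fun j => y j z)]
  have hX : ∀ j v, dd v (fun z => 2 * a * y j z) z = 2 * a * dd v (y j) z := by
    intro j v
    rw [dd_mul (f := fun _ => 2 * a) (by fun_prop) (by fun_prop), dd_const]; ring
  have hN : ∀ v, dd v (fun z => u z * u z + w z * w z) z
      = 2 * u z * dd v u z + 2 * w z * dd v w z := by
    intro v
    rw [dd_add (by fun_prop) (by fun_prop), dd_mul hu hu, dd_mul hw hw]; ring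
  have hJ : ∀ v k, dd v (fun z => dd k u z * w z - dd k w z * u z) z
      = dd v (dd k u) z * w z + dd k u z * dd v w z
        - (dd v (dd k w) z * u z + dd k w z * dd v u z) := by
    intro v k
    rw [dd_sub (by fun_prop) (by fun_prop), dd_mul (by fun_prop) hw, dd_mul (by fun_prop) hu]
  congr 1
  congr 1
  · congr 1
    · congr 1
      · congr 1
        · congr 1
          · simp only [F1]
            rw [dd_mul hq (by fun_prop), hN]; ring
          · refine Finset.sum_congr rfl fun j _ => ?_
            simp only [F2, F2']
            rw [dd_mul (by fun_prop) (by fun_prop), hX, dd_mul (by fun_prop) (by fun_prop), hX,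
              hJ, hJ, hye, hyt, dd_comm hu τ, dd_comm hw τ, ← hac]
            simp only [if_true]
            ring
        · refine Finset.sum_congr rfl fun j _ => ?_
          simp only [F3]
          rw [dd_mul (by fun_prop) (by fun_prop), hJ, hqe]
          ring
      · refine Finset.sum_congr rfl fun j _ => Finset.sum_congr rfl fun k _ => ?_
        simp only [F4, F4']
        rw [dd_mul (by fun_prop) (by fun_prop), hX, dd_mul (by fun_prop) (by fun_prop), hX,
          dd_add (by fun_prop) (by fun_prop), dd_add (by fun_prop) (by fun_prop),
          dd_mul (by fun_prop) (by fun_prop), dd_mul (by fun_prop) (by fun_prop),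
          dd_mul (by fun_prop) (by fun_prop), dd_mul (by fun_prop) (by fun_prop),
          hye, hye, dd_comm hu (e k) (e j), dd_comm hw (e k) (e j), ← hac]
        simp only [if_true]
        ring
    · refine Finset.sum_congr rfl fun j _ => ?_
      simp only [F5]
      rw [dd_add (by fun_prop) (by fun_prop), dd_mul (by fun_prop) (by fun_prop),
        dd_mul (by fun_prop) (by fun_prop)]
      ring
  · refine Finset.sum_congr rfl fun j _ => ?_
    simp only [F6]
    rw [dd_mul (by fun_prop) (by fun_prop), dd_mul (f := fun _ => a ^ 2) (by fun_prop) hV,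
      dd_const, hVe, dd_mul (by fun_prop) (by fun_prop), hX, hN, hye, ← hac]
    simp only [if_true, pow_two]
    ring

end CarlemanCore

section CarlemanMain
open scoped ContDiff

lemma dd_comp_snd {X : Type*} [NormedAddCommGroup X] [NormedSpace ℝ X] {h : ℝ → ℝ}
    (hh : ContDiff ℝ ∞ h) (v z : X × ℝ) :
    dd v (fun z : X × ℝ => h z.2) z = deriv h z.2 * v.2 := by
  have h1 : HasDerivAt h (deriv h z.2) z.2 := (hh.differentiable (by simp) _).hasDerivAt
  have h2 : HasFDerivAt (fun z : X × ℝ => z.2) (ContinuousLinearMap.snd ℝ X ℝ) z := hasFDerivAt_snd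
  have := h1.comp_hasFDerivAt z h2
  have h3 : fderiv ℝ (fun z : X × ℝ => h z.2) z = _ := this.fderiv
  rw [dd, h3]
  simp

lemma dd_coord {m : ℕ} (j : Fin m) (v z : EuclideanSpace ℝ (Fin m) × ℝ) :
    dd v (fun z : EuclideanSpace ℝ (Fin m) × ℝ => z.1 j) z = v.1 j := by
  have : fderiv ℝ (fun z : EuclideanSpace ℝ (Fin m) × ℝ => z.1 j) z = _ :=
    ((EuclideanSpace.proj (𝕜 := ℝ) j).comp
      (ContinuousLinearMap.fst ℝ (EuclideanSpace ℝ (Fin m)) ℝ)).fderiv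
  rw [dd, this]
  simp

lemma smooth_coord {m : ℕ} (j : Fin m) :
    ContDiff ℝ ∞ (fun z : EuclideanSpace ℝ (Fin m) × ℝ => z.1 j) :=
  ((EuclideanSpace.proj (𝕜 := ℝ) j).comp
      (ContinuousLinearMap.fst ℝ (EuclideanSpace ℝ (Fin m)) ℝ)).contDiff

lemma dd_conj {E : Type*} [NormedAddCommGroup E] [NormedSpace ℝ E] {θ p : E → ℝ}
    (hθ : ContDiff ℝ ∞ θ) (hp : ContDiff ℝ ∞ p) (v z : E) :
    dd v (fun z => Real.exp (θ z) * p z) z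
      = dd v θ z * (Real.exp (θ z) * p z) + Real.exp (θ z) * dd v p z := by
  rw [dd_mul (by fun_prop) hp]
  have : dd v (fun z => Real.exp (θ z)) z = Real.exp (θ z) * dd v θ z := by
    unfold dd
    rw [fderiv_exp (hθ.differentiable (by simp) z)]
    simp
  rw [this]; ring

lemma dd_conj2 {E : Type*} [NormedAddCommGroup E] [NormedSpace ℝ E] {θ p : E → ℝ}
    (hθ : ContDiff ℝ ∞ θ) (hp : ContDiff ℝ ∞ p) (v z : E) :
    Real.exp (θ z) * dd v (dd v p) z = dd v (dd v (fun z => Real.exp (θ z) * p z)) z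
      - 2 * dd v θ z * dd v (fun z => Real.exp (θ z) * p z) z
      + (dd v θ z) ^ 2 * (Real.exp (θ z) * p z) - dd v (dd v θ) z * (Real.exp (θ z) * p z) := by
  have h : dd v (fun z => Real.exp (θ z) * p z)
      = fun z => dd v θ z * (Real.exp (θ z) * p z) + Real.exp (θ z) * dd v p z :=
    funext fun z => dd_conj hθ hp v z
  rw [h, dd_add (by fun_prop) (by fun_prop), dd_mul (by fun_prop) (by fun_prop),
    dd_conj hθ hp, dd_conj hθ (dd_smooth hp v)]
  ring

lemma deriv_slice {m : ℕ} {g : EuclideanSpace ℝ (Fin m) × ℝ → ℂ} (hg : ContDiff ℝ ∞ g)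
    (x : EuclideanSpace ℝ (Fin m)) (t : ℝ) :
    deriv (fun s => g (x, s)) t = dd ((0, 1) : EuclideanSpace ℝ (Fin m) × ℝ) g (x, t) := by
  have h1 : HasFDerivAt g (fderiv ℝ g (x, t)) (x, t) :=
    (hg.differentiable (by simp) _).hasFDerivAt
  have h2 : HasDerivAt (fun s : ℝ => (x, s)) ((0 : EuclideanSpace ℝ (Fin m)), (1:ℝ)) t :=
    (hasDerivAt_const t x).prodMk (hasDerivAt_id t)
  exact (h1.comp_hasDerivAt t h2).deriv

lemma fderiv_slice {m : ℕ} {g : EuclideanSpace ℝ (Fin m) × ℝ → ℂ} (hg : ContDiff ℝ ∞ g)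
    (x v : EuclideanSpace ℝ (Fin m)) (t : ℝ) :
    fderiv ℝ (fun y => g (y, t)) x v = dd ((v, 0) : EuclideanSpace ℝ (Fin m) × ℝ) g (x, t) := by
  have h1 : HasFDerivAt g (fderiv ℝ g (x, t)) (x, t) :=
    (hg.differentiable (by simp) _).hasFDerivAt
  have h2 : HasFDerivAt (fun y : EuclideanSpace ℝ (Fin m) => (y, t))
      (ContinuousLinearMap.inl ℝ (EuclideanSpace ℝ (Fin m)) ℝ) x := hasFDerivAt_prodMk_left x t
  have h3 : fderiv ℝ (fun y => g (y, t)) x = _ := (h1.comp x h2).fderiv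
  rw [h3]
  simp [dd]

lemma lapl_slice {m : ℕ} {g : EuclideanSpace ℝ (Fin m) × ℝ → ℂ} (hg : ContDiff ℝ ∞ g)
    (x : EuclideanSpace ℝ (Fin m)) (t : ℝ) :
    lapl (fun y => g (y, t)) x = ∑ j, dd ((EuclideanSpace.single j 1, 0) :
      EuclideanSpace ℝ (Fin m) × ℝ) (dd (EuclideanSpace.single j 1, 0) g) (x, t) := by
  unfold lapl
  refine Finset.sum_congr rfl fun j _ => ?_
  simp only [fderiv_slice hg]
  exact fderiv_slice (dd_smooth hg _) _ _ _

lemma dd_re {E : Type*} [NormedAddCommGroup E] [NormedSpace ℝ E] {g : E → ℂ}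
    (hg : ContDiff ℝ ∞ g) (v : E) : dd v (fun z => (g z).re) = fun z => (dd v g z).re := by
  funext z
  have := (Complex.reCLM.hasFDerivAt.comp z (hg.differentiable (by simp) z).hasFDerivAt).fderiv
  have h : fderiv ℝ (fun z => (g z).re) z = _ := this
  rw [dd, h]
  simp [dd]

lemma dd_im {E : Type*} [NormedAddCommGroup E] [NormedSpace ℝ E] {g : E → ℂ}
    (hg : ContDiff ℝ ∞ g) (v : E) : dd v (fun z => (g z).im) = fun z => (dd v g z).im := by
  funext z
  have := (Complex.imCLM.hasFDerivAt.comp z (hg.differentiable (by simp) z).hasFDerivAt).fderiv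
  have h : fderiv ℝ (fun z => (g z).im) z = _ := this
  rw [dd, h]
  simp [dd]

/-- the final positivity of the commutator form -/
lemma carleman_pos {ι : Type*} [Fintype ι] (o : ι) (μ R p1 p2 s2 u w : ℝ) (hμ : 0 < μ) (hR : 0 < R)
    (uj wj y : ι → ℝ) :
    (s2 - R ^ 4 / (32 * μ) * p2 ^ 2) * (u ^ 2 + w ^ 2) ≤
      (s2 - 2 * μ * p2 * y o + 2 * μ * p1 ^ 2) * (u ^ 2 + w ^ 2)
        + 4 * (2 * μ * R⁻¹ * R⁻¹) * (∑ j, (uj j ^ 2 + wj j ^ 2))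
        + 4 * (2 * μ * R⁻¹) ^ 2 * (2 * μ * R⁻¹ * R⁻¹) * (∑ k, y k ^ 2) * (u ^ 2 + w ^ 2)
        + 4 * (2 * μ * R⁻¹) * p1 * (uj o * w - wj o * u) := by
  have h1 : uj o ^ 2 + wj o ^ 2 ≤ ∑ j, (uj j ^ 2 + wj j ^ 2) :=
    Finset.single_le_sum (f := fun j => uj j ^ 2 + wj j ^ 2) (fun j _ => by positivity)
      (Finset.mem_univ o)
  have h2 : y o ^ 2 ≤ ∑ k, y k ^ 2 :=
    Finset.single_le_sum (f := fun j => y j ^ 2) (fun j _ => by positivity) (Finset.mem_univ o)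
  have h3 := mul_le_mul_of_nonneg_left h1 (show 0 ≤ 4 * (2 * μ * R⁻¹ * R⁻¹) by positivity)
  have h4 := mul_le_mul_of_nonneg_left h2
    (show 0 ≤ 4 * (2 * μ * R⁻¹) ^ 2 * (2 * μ * R⁻¹ * R⁻¹) * (u ^ 2 + w ^ 2) by positivity)
  have h5 : 0 ≤ 8 * μ * ((R⁻¹ * uj o + p1 / 2 * w) ^ 2 + (R⁻¹ * wj o - p1 / 2 * u) ^ 2) := by
    positivity
  have h6 : 0 ≤ (u ^ 2 + w ^ 2) * ((32 * μ ^ 2 * R⁻¹ ^ 2 * y o - R ^ 2 * p2) ^ 2 / (32 * μ)) := by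
    positivity
  have h7 : (32 * μ ^ 2 * R⁻¹ ^ 2 * y o - R ^ 2 * p2) ^ 2 / (32 * μ)
      = 32 * μ ^ 3 * R⁻¹ ^ 4 * y o ^ 2 - 2 * μ * p2 * y o + R ^ 4 / (32 * μ) * p2 ^ 2 := by
    field_simp
    ring
  rw [h7] at h6
  nlinarith [h3, h4, h5, h6]

end CarlemanMain

lemma carleman_sq (a b c d : ℝ) : 2 * (a * b + c * d) ≤ (a + b) ^ 2 + (c + d) ^ 2 := by
  nlinarith [sq_nonneg a, sq_nonneg b, sq_nonneg c, sq_nonneg d]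

open scoped ContDiff in
/-- Fubini and localisation to `[0,1]`. -/
lemma carleman_fubini {X : Type*} [NormedAddCommGroup X] [NormedSpace ℝ X]
    [FiniteDimensional ℝ X] [MeasureSpace X] [BorelSpace X]
    [(volume : Measure X).IsAddHaarMeasure] {K : Set (X × ℝ)}
    (hKt : K ⊆ univ ×ˢ Ioo (0:ℝ) 1) {G : X × ℝ → ℝ}
    (hG : Integrable G ((volume : Measure X).prod volume)) (h0 : ∀ z, z ∉ K → G z = 0) :
    ∫ t in Icc (0:ℝ) 1, ∫ x : X, G (x, t) = ∫ z, G z ∂((volume : Measure X).prod volume) := by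
  rw [integral_prod_symm _ hG]
  refine setIntegral_eq_integral_of_forall_compl_eq_zero fun t ht => ?_
  have : ∀ x : X, G (x, t) = 0 := fun x => h0 _ fun hx => ht (Ioo_subset_Icc_self (hKt hx).2)
  simp [this]

set_option maxHeartbeats 1000000 in
open scoped ContDiff in
lemma carleman_aux (n : ℕ) (μ : ℝ) (hμ : 0 < μ)
    (φ ψ : ℝ → ℝ) (hφ : ContDiff ℝ ∞ φ) (hψ : ContDiff ℝ ∞ ψ)
    (g : EuclideanSpace ℝ (Fin (n + 1)) × ℝ → ℂ)
    (hg : ContDiff ℝ ∞ g) (hgsupp : HasCompactSupport g)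
    (hgt : tsupport g ⊆ univ ×ˢ Ioo (0:ℝ) 1) (R : ℝ) (hR : 0 < R) :
      (∫ t in Icc (0:ℝ) 1, ∫ x : EuclideanSpace ℝ (Fin (n + 1)),
        (deriv (deriv ψ) t - R ^ 4 / (32 * μ) * deriv (deriv φ) t ^ 2) *
          Real.exp (2 * ψ t) *
          Real.exp (2 * μ *
            ‖R⁻¹ • x - φ t • EuclideanSpace.single (0 : Fin (n + 1)) (1:ℝ)‖ ^ 2) *
          ‖g (x, t)‖ ^ 2) ≤
      ∫ t in Icc (0:ℝ) 1, ∫ x : EuclideanSpace ℝ (Fin (n + 1)),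
        Real.exp (2 * ψ t) *
          Real.exp (2 * μ *
            ‖R⁻¹ • x - φ t • EuclideanSpace.single (0 : Fin (n + 1)) (1:ℝ)‖ ^ 2) *
          ‖Complex.I * deriv (fun s => g (x, s)) t + lapl (fun y => g (y, t)) x‖ ^ 2 := by
  let e : Fin (n + 1) → (EuclideanSpace ℝ (Fin (n + 1)) × ℝ) := fun j => (EuclideanSpace.single j 1, 0)
  let τ : (EuclideanSpace ℝ (Fin (n + 1)) × ℝ) := (0, 1)
  let ν : Measure (EuclideanSpace ℝ (Fin (n + 1)) × ℝ) := (volume : Measure (EuclideanSpace ℝ (Fin (n + 1)))).prod volume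
  have hφ1 : ContDiff ℝ ∞ (deriv φ) := ((contDiff_succ_iff_deriv (n := ∞)).1 hφ).2.2
  have hψ1 : ContDiff ℝ ∞ (deriv ψ) := ((contDiff_succ_iff_deriv (n := ∞)).1 hψ).2.2
  have hφ2 : ContDiff ℝ ∞ (deriv (deriv φ)) := ((contDiff_succ_iff_deriv (n := ∞)).1 hφ1).2.2
  have hψ2 : ContDiff ℝ ∞ (deriv (deriv ψ)) := ((contDiff_succ_iff_deriv (n := ∞)).1 hψ1).2.2
  let y : Fin (n + 1) → (EuclideanSpace ℝ (Fin (n + 1)) × ℝ) → ℝ := fun j z => R⁻¹ * z.1 j - φ z.2 * (if j = 0 then 1 else 0)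
  have hcoord : ∀ j : Fin (n + 1), ContDiff ℝ ∞ (fun z : (EuclideanSpace ℝ (Fin (n + 1)) × ℝ) => z.1 j) := smooth_coord
  have hsnd : ContDiff ℝ ∞ (fun z : (EuclideanSpace ℝ (Fin (n + 1)) × ℝ) => z.2) := contDiff_snd
  have hφs : ContDiff ℝ ∞ (fun z : (EuclideanSpace ℝ (Fin (n + 1)) × ℝ) => φ z.2) := hφ.comp hsnd
  have hψs : ContDiff ℝ ∞ (fun z : (EuclideanSpace ℝ (Fin (n + 1)) × ℝ) => ψ z.2) := hψ.comp hsnd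
  have hφ1s : ContDiff ℝ ∞ (fun z : (EuclideanSpace ℝ (Fin (n + 1)) × ℝ) => deriv φ z.2) := hφ1.comp hsnd
  have hψ1s : ContDiff ℝ ∞ (fun z : (EuclideanSpace ℝ (Fin (n + 1)) × ℝ) => deriv ψ z.2) := hψ1.comp hsnd
  have hy : ∀ j, ContDiff ℝ ∞ (y j) := fun j =>
    (contDiff_const.mul (hcoord j)).sub (hφs.mul contDiff_const)
  have hdy : ∀ j v z, dd v (y j) z
      = R⁻¹ * v.1 j - deriv φ z.2 * v.2 * (if j = 0 then 1 else 0) := by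
    intro j v z
    simp only [y]
    rw [dd_sub (contDiff_const.mul (hcoord j)) (hφs.mul contDiff_const),
      dd_mul contDiff_const (hcoord j), dd_mul hφs contDiff_const, dd_const, dd_const,
      dd_coord, dd_comp_snd hφ]
    ring
  have hye : ∀ j k z, dd (e j) (y k) z = R⁻¹ * (if j = k then 1 else 0) := by
    intro j k z
    rw [hdy]
    simp [e, eq_comm]
  have hyt : ∀ j z, dd τ (y j) z = -deriv φ z.2 * (if j = 0 then 1 else 0) := by
    intro j z
    rw [hdy]
    simp only [τ]
    split_ifs <;> simp
  let q : (EuclideanSpace ℝ (Fin (n + 1)) × ℝ) → ℝ := fun z => deriv ψ z.2 - 2 * μ * (deriv φ z.2 * y 0 z)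
  have hq : ContDiff ℝ ∞ q :=
    hψ1s.sub (contDiff_const.mul (hφ1s.mul (hy 0)))
  have hdq : ∀ v z, dd v q z = deriv (deriv ψ) z.2 * v.2
      - 2 * μ * (deriv (deriv φ) z.2 * v.2 * y 0 z + deriv φ z.2 * dd v (y 0) z) := by
    intro v z
    simp only [q]
    rw [dd_sub hψ1s (contDiff_const.mul (hφ1s.mul (hy 0))),
      dd_mul contDiff_const (hφ1s.mul (hy 0)), dd_const,
      dd_mul hφ1s (hy 0), dd_comp_snd hψ1, dd_comp_snd hφ1]
    ring
  have hqe : ∀ j z, dd (e j) q z = -(2 * μ * R⁻¹ * deriv φ z.2) * (if j = 0 then 1 else 0) := by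
    intro j z
    rw [hdq, hye]
    simp only [e]
    ring
  have hqt : ∀ z, dd τ q z = deriv (deriv ψ) z.2 - 2 * μ * deriv (deriv φ) z.2 * y 0 z
      + 2 * μ * deriv φ z.2 ^ 2 := by
    intro z
    rw [hdq, hyt]
    simp only [τ, if_true]
    ring
  let Y : (EuclideanSpace ℝ (Fin (n + 1)) × ℝ) → ℝ := fun z => ∑ k, y k z * y k z
  have hY : ContDiff ℝ ∞ Y := ContDiff.sum fun k _ => (hy k).mul (hy k)
  have hdY : ∀ v z, dd v Y z = ∑ k, 2 * y k z * dd v (y k) z := by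
    intro v z
    simp only [Y]
    rw [dd_sum fun k => (hy k).mul (hy k)]
    refine Finset.sum_congr rfl fun k _ => ?_
    rw [dd_mul (hy k) (hy k)]; ring
  let θ : (EuclideanSpace ℝ (Fin (n + 1)) × ℝ) → ℝ := fun z => ψ z.2 + μ * Y z
  have hθ : ContDiff ℝ ∞ θ := hψs.add (contDiff_const.mul hY)
  have hdθ : ∀ v z, dd v θ z = deriv ψ z.2 * v.2 + μ * dd v Y z := by
    intro v z
    simp only [θ]
    rw [dd_add hψs (contDiff_const.mul hY), dd_mul contDiff_const hY, dd_const,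
      dd_comp_snd hψ]
    ring
  have hθe : ∀ j, dd (e j) θ = fun z => 2 * μ * R⁻¹ * y j z := by
    intro j
    funext z
    rw [hdθ, hdY]
    simp only [hye, mul_ite, mul_one, mul_zero, Finset.sum_ite_eq, Finset.mem_univ, if_true]
    simp only [e]
    ring
  have hθee : ∀ j z, dd (e j) (dd (e j) θ) z = 2 * μ * R⁻¹ * R⁻¹ := by
    intro j z
    rw [hθe, dd_mul contDiff_const (hy j), dd_const, hye]
    simp
  have hθt : ∀ z, dd τ θ z = q z := by
    intro z
    rw [hdθ, hdY]
    simp only [hyt, mul_ite, mul_one, mul_zero, Finset.sum_ite_eq', Finset.mem_univ, if_true]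
    simp only [τ, q]
    ring
  -- the conjugated function
  let p : (EuclideanSpace ℝ (Fin (n + 1)) × ℝ) → ℝ := fun z => (g z).re
  let s : (EuclideanSpace ℝ (Fin (n + 1)) × ℝ) → ℝ := fun z => (g z).im
  have hp : ContDiff ℝ ∞ p := Complex.reCLM.contDiff.comp hg
  have hs : ContDiff ℝ ∞ s := Complex.imCLM.contDiff.comp hg
  let u : (EuclideanSpace ℝ (Fin (n + 1)) × ℝ) → ℝ := fun z => Real.exp (θ z) * p z
  let w : (EuclideanSpace ℝ (Fin (n + 1)) × ℝ) → ℝ := fun z => Real.exp (θ z) * s z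
  have hu : ContDiff ℝ ∞ u := (Real.contDiff_exp.comp hθ).mul hp
  have hw : ContDiff ℝ ∞ w := (Real.contDiff_exp.comp hθ).mul hs
  have hg0 : ∀ z, z ∉ tsupport g → g z = 0 := fun z hz => image_eq_zero_of_notMem_tsupport hz
  have hu0 : ∀ z, z ∉ tsupport g → u z = 0 := fun z hz => by simp [u, p, hg0 z hz]
  have hw0 : ∀ z, z ∉ tsupport g → w z = 0 := fun z hz => by simp [w, s, hg0 z hz]
  obtain ⟨T, hT, hTz⟩ := carleman_core ν hgsupp (0 : Fin (n + 1)) e τ (2 * μ * R⁻¹)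
    (2 * μ * R⁻¹ * R⁻¹) R⁻¹ rfl u w q (fun z => deriv φ z.2) y hu hw hq hy hu0 hw0 hye hyt hqe
  -- the weight
  have hnorm : ∀ z : (EuclideanSpace ℝ (Fin (n + 1)) × ℝ),
      ‖R⁻¹ • z.1 - φ z.2 • EuclideanSpace.single (0 : Fin (n + 1)) (1:ℝ)‖ ^ 2 = Y z := by
    intro z
    rw [EuclideanSpace.norm_sq_eq]
    refine Finset.sum_congr rfl fun k _ => ?_
    simp [y, pow_two]
  have hwt : ∀ z : (EuclideanSpace ℝ (Fin (n + 1)) × ℝ), Real.exp (2 * ψ z.2) * Real.exp (2 * μ * Y z) = Real.exp (θ z) ^ 2 := by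
    intro z
    rw [← Real.exp_add, ← Real.exp_nat_mul]
    congr 1
    simp only [θ]
    push_cast
    ring
  let L : (EuclideanSpace ℝ (Fin (n + 1)) × ℝ) → ℂ := fun z => Complex.I * dd τ g z + ∑ j, dd (e j) (dd (e j) g) z
  let G1 : (EuclideanSpace ℝ (Fin (n + 1)) × ℝ) → ℝ := fun z =>
    (deriv (deriv ψ) z.2 - R ^ 4 / (32 * μ) * deriv (deriv φ) z.2 ^ 2) *
      (Real.exp (θ z) ^ 2 * ‖g z‖ ^ 2)
  let G2 : (EuclideanSpace ℝ (Fin (n + 1)) × ℝ) → ℝ := fun z => Real.exp (θ z) ^ 2 * ‖L z‖ ^ 2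
  have hLc : Continuous L :=
    (continuous_const.mul (dd_smooth hg _).continuous).add
      (continuous_finsetSum _ fun j _ => (dd_smooth (dd_smooth hg _) _).continuous)
  have hθc := hθ.continuous
  have hgc := hg.continuous
  have hφ2c := hφ2.continuous
  have hψ2c := hψ2.continuous
  have hG1c : Continuous G1 := by fun_prop
  have hG2c : Continuous G2 := by fun_prop
  have hL0 : ∀ z, z ∉ tsupport g → L z = 0 := by
    intro z hz
    have hc : IsClosed (tsupport g) := isClosed_tsupport g
    simp only [L]
    rw [dd_zero_off hc hg0 τ z hz, Finset.sum_eq_zero fun j _ =>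
      dd_zero_off hc (dd_zero_off hc hg0 (e j)) (e j) z hz]
    simp
  have hG10 : ∀ z, z ∉ tsupport g → G1 z = 0 := fun z hz => by simp [G1, hg0 z hz]
  have hG20 : ∀ z, z ∉ tsupport g → G2 z = 0 := fun z hz => by simp [G2, hL0 z hz]
  have hG1i : Integrable G1 ν :=
    hG1c.integrable_of_hasCompactSupport (HasCompactSupport.intro hgsupp hG10)
  have hG2i : Integrable G2 ν :=
    hG2c.integrable_of_hasCompactSupport (HasCompactSupport.intro hgsupp hG20)
  have hpt : ∀ z, G1 z + T z ≤ G2 z := by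
    intro z
    have hg1 : G1 z = (deriv (deriv ψ) z.2 - R ^ 4 / (32 * μ) * deriv (deriv φ) z.2 ^ 2)
        * (u z ^ 2 + w z ^ 2) := by
      simp only [G1, u, w, p, s]
      rw [Complex.sq_norm, Complex.normSq_apply]
      ring
    have hre : (L z).re = -dd τ s z + ∑ j, dd (e j) (dd (e j) p) z := by
      simp only [L, p, s, dd_re hg, dd_im hg, dd_re (dd_smooth hg _), Complex.add_re,
        Complex.re_sum, Complex.mul_re, Complex.I_re, Complex.I_im]
      ring
    have him : (L z).im = dd τ p z + ∑ j, dd (e j) (dd (e j) s) z := by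
      simp only [L, p, s, dd_re hg, dd_im hg, dd_im (dd_smooth hg _), Complex.add_im,
        Complex.im_sum, Complex.mul_im, Complex.I_re, Complex.I_im]
      ring
    have hlap : ∀ (f h : (EuclideanSpace ℝ (Fin (n + 1)) × ℝ) → ℝ) (_ : ContDiff ℝ ∞ f) (_ : h = fun z => Real.exp (θ z) * f z),
        Real.exp (θ z) * ∑ j, dd (e j) (dd (e j) f) z
        = (∑ j, dd (e j) (dd (e j) h) z) + (2 * μ * R⁻¹) ^ 2 * (∑ k, y k z ^ 2) * h z
          - (∑ j, 2 * (2 * μ * R⁻¹) * y j z * dd (e j) h z)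
          - (∑ _j : Fin (n + 1), 2 * μ * R⁻¹ * R⁻¹) * h z := by
      rintro f h hf rfl
      rw [Finset.mul_sum, Finset.mul_sum, Finset.sum_mul, Finset.sum_mul,
        ← Finset.sum_add_distrib, ← Finset.sum_sub_distrib, ← Finset.sum_sub_distrib]
      refine Finset.sum_congr rfl fun j _ => ?_
      rw [dd_conj2 hθ hf, hθee, hθe]
      ring
    have hut : dd τ u z = q z * u z + Real.exp (θ z) * dd τ p z := by
      rw [← hθt]; exact dd_conj hθ hp τ z
    have hwt' : dd τ w z = q z * w z + Real.exp (θ z) * dd τ s z := by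
      rw [← hθt]; exact dd_conj hθ hs τ z
    have h1 := hlap p u hp rfl
    have h2 := hlap s w hs rfl
    have hg2 : G2 z = (Real.exp (θ z) * (L z).re) ^ 2 + (Real.exp (θ z) * (L z).im) ^ 2 := by
      simp only [G2]
      rw [Complex.sq_norm, Complex.normSq_apply]
      ring
    have hpos := carleman_pos (0 : Fin (n + 1)) μ R (deriv φ z.2) (deriv (deriv φ) z.2)
      (deriv (deriv ψ) z.2) (u z) (w z) hμ hR (fun j => dd (e j) u z) (fun j => dd (e j) w z)
      (fun j => y j z)
    have hkey := hTz z
    rw [hqt] at hkey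
    have hA : Real.exp (θ z) * (L z).re =
        (-dd τ w z + (∑ j, dd (e j) (dd (e j) u) z)
          + (2 * μ * R⁻¹) ^ 2 * (∑ k, y k z ^ 2) * u z) +
        (q z * w z - (∑ j, 2 * (2 * μ * R⁻¹) * y j z * dd (e j) u z)
          - (∑ _j : Fin (n + 1), 2 * μ * R⁻¹ * R⁻¹) * u z) := by
      rw [hre, mul_add, h1, hwt']; ring
    have hB : Real.exp (θ z) * (L z).im =
        (dd τ u z + (∑ j, dd (e j) (dd (e j) w) z)
          + (2 * μ * R⁻¹) ^ 2 * (∑ k, y k z ^ 2) * w z) +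
        (-q z * u z - (∑ j, 2 * (2 * μ * R⁻¹) * y j z * dd (e j) w z)
          - (∑ _j : Fin (n + 1), 2 * μ * R⁻¹ * R⁻¹) * w z) := by
      rw [him, mul_add, h2, hut]; ring
    rw [hg1, hg2, hA, hB]
    refine le_trans ?_ (carleman_sq _ _ _ _)
    rw [hkey]
    exact le_trans (le_of_eq (add_comm _ _)) (add_le_add le_rfl hpos)
  have hfin : ∫ z, G1 z ∂ν ≤ ∫ z, G2 z ∂ν := by
    have h1 := integral_mono (hG1i.add hT.1) hG2i hpt
    have h2 : ∫ z, (G1 + T) z ∂ν = ∫ z, G1 z ∂ν + ∫ z, T z ∂ν := integral_add hG1i hT.1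
    rw [h2, hT.2, add_zero] at h1
    exact h1
  rw [← carleman_fubini hgt hG1i hG10, ← carleman_fubini hgt hG2i hG20] at hfin
  refine le_trans (le_of_eq ?_) (le_trans hfin (le_of_eq ?_))
  · congr 1
    funext t
    congr 1
    funext x
    have h1 := hnorm (x, t)
    have h2 := hwt (x, t)
    simp only at h1 h2
    simp only [G1]
    rw [h1, ← h2]
    ring
  · congr 1
    funext t
    congr 1
    funext x
    have h1 := hnorm (x, t)
    have h2 := hwt (x, t)
    simp only at h1 h2
    simp only [G2, L]
    rw [h1, ← h2, deriv_slice hg, lapl_slice hg]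

/-- **Carleman inequality with moving Gaussian weight
(Escauriaza–Kenig–Ponce–Vega).** For smooth `φ, ψ : [0,1] → ℝ`, `μ > 0` and
`g ∈ C₀^∞(ℝⁿ × (0,1))`, for all sufficiently large `R`,
`∫∫ [ψ'' − (R⁴/32μ)(φ'')²] e^{2ψ} e^{2μ|x/R − φ(t)e₁|²}|g|²
  ≤ ∫∫ e^{2ψ} e^{2μ|x/R − φ(t)e₁|²} |(i∂ₜ + Δ)g|²`. -/
theorem carleman_moving_gaussian (n : ℕ) (μ : ℝ) (hμ : 0 < μ)
    (φ ψ : ℝ → ℝ) (hφ : ContDiff ℝ (⊤ : ℕ∞) φ) (hψ : ContDiff ℝ (⊤ : ℕ∞) ψ)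
    (g : EuclideanSpace ℝ (Fin (n + 1)) × ℝ → ℂ)
    (hg : ContDiff ℝ (⊤ : ℕ∞) g) (hgsupp : HasCompactSupport g)
    (hgt : tsupport g ⊆ univ ×ˢ Ioo (0:ℝ) 1) :
    ∃ R₀ > (0:ℝ), ∀ R : ℝ, R₀ ≤ R →
      (∫ t in Icc (0:ℝ) 1, ∫ x : EuclideanSpace ℝ (Fin (n + 1)),
        (deriv (deriv ψ) t - R ^ 4 / (32 * μ) * deriv (deriv φ) t ^ 2) *
          Real.exp (2 * ψ t) *
          Real.exp (2 * μ *
            ‖R⁻¹ • x - φ t • EuclideanSpace.single (0 : Fin (n + 1)) (1:ℝ)‖ ^ 2) *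
          ‖g (x, t)‖ ^ 2) ≤
      ∫ t in Icc (0:ℝ) 1, ∫ x : EuclideanSpace ℝ (Fin (n + 1)),
        Real.exp (2 * ψ t) *
          Real.exp (2 * μ *
            ‖R⁻¹ • x - φ t • EuclideanSpace.single (0 : Fin (n + 1)) (1:ℝ)‖ ^ 2) *
          ‖Complex.I * deriv (fun s => g (x, s)) t + lapl (fun y => g (y, t)) x‖ ^ 2 := by
  exact ⟨1, one_pos, fun R hR =>
    carleman_aux n μ hμ φ ψ hφ hψ g hg hgsupp hgt R (lt_of_lt_of_le one_pos hR)⟩
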